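/- arXiv:2408.04030 — 4 statements merged into one kernel-verified Lean document; each statement's English description precedes it below -/
import Mathlib

section
/- Let z₀, w₀ ∈ 𝔻 with |w₀| < |z₀|, and set u₀ := w₀/z₀. Let f ∈ ℋ satisfy f(0) = 0 and f(z₀) = w₀. Then there exists f* ∈ 𝒮 such that f(z) = z·T_{u₀}(T_{−z₀}(z)·f*(z)) for all z ∈ 𝔻. -/
open Complex Metric

/-- `ℋ`: analytic self-maps of the open unit disk. -/
def Hclass (f : ℂ → ℂ) : Prop :=
  DifferentiableOn ℂ f (ball (0 : ℂ) 1) ∧ Set.MapsTo f (ball (0 : ℂ) 1) (ball (0 : ℂ) 1)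

/-- `𝒮`: analytic maps of the open unit disk into the closed unit disk. -/
def Sclass (f : ℂ → ℂ) : Prop :=
  DifferentiableOn ℂ f (ball (0 : ℂ) 1) ∧ Set.MapsTo f (ball (0 : ℂ) 1) (closedBall (0 : ℂ) 1)

/-- The Möbius transformation `T_a(z) = (z + a)/(1 + conj(a) z)`. -/
noncomputable def T (a z : ℂ) : ℂ := (z + a) / (1 + (starRingEnd ℂ) a * z)

theorem T_den_ne {a z : ℂ} (ha : ‖a‖ < 1) (hz : ‖z‖ ≤ 1) :
    1 + (starRingEnd ℂ) a * z ≠ 0 := by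
  intro h
  have h1 : (starRingEnd ℂ) a * z = -1 := by linear_combination h
  have h2 : ‖a‖ * ‖z‖ = 1 := by
    have := congrArg norm h1
    simpa using this
  nlinarith [norm_nonneg a, norm_nonneg z]

theorem T_identity (a z : ℂ) : ‖1 + (starRingEnd ℂ) a * z‖ ^ 2 - ‖z + a‖ ^ 2
    = (1 - ‖a‖ ^ 2) * (1 - ‖z‖ ^ 2) := by
  simp only [← Complex.normSq_eq_norm_sq, Complex.normSq_apply]
  simp
  ring

theorem T_norm_le {a z : ℂ} (ha : ‖a‖ < 1) (hz : ‖z‖ ≤ 1) : ‖T a z‖ ≤ 1 := by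
  have hd := T_den_ne ha hz
  unfold T
  rw [norm_div, div_le_one (norm_pos_iff.mpr hd)]
  have h := T_identity a z
  have h1 : 0 ≤ (1 - ‖a‖ ^ 2) * (1 - ‖z‖ ^ 2) := by
    apply mul_nonneg <;> nlinarith [norm_nonneg a, norm_nonneg z]
  exact le_of_sq_le_sq (by linarith) (norm_nonneg _)

theorem T_norm_lt {a z : ℂ} (ha : ‖a‖ < 1) (hz : ‖z‖ < 1) : ‖T a z‖ < 1 := by
  have hd := T_den_ne ha hz.le
  unfold T
  rw [norm_div, div_lt_one (norm_pos_iff.mpr hd)]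
  have h := T_identity a z
  have h1 : 0 < (1 - ‖a‖ ^ 2) * (1 - ‖z‖ ^ 2) := by
    apply mul_pos <;> nlinarith [norm_nonneg a, norm_nonneg z]
  exact lt_of_pow_lt_pow_left₀ 2 (norm_nonneg _) (by linarith)

theorem T_T_neg {a z : ℂ} (ha : ‖a‖ < 1) (hz : ‖z‖ ≤ 1) : T a (T (-a) z) = z := by
  have hd := T_den_ne (a := -a) (by simpa using ha) hz
  have hd2 := T_den_ne ha (T_norm_le (a := -a) (by simpa using ha) hz)
  have hk : T (-a) z * (1 + (starRingEnd ℂ) (-a) * z) = z + -a := by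
    unfold T
    exact div_mul_cancel₀ _ hd
  rw [T, div_eq_iff hd2]
  apply mul_right_cancel₀ hd
  simp only [map_neg] at *
  linear_combination (1 - z * (starRingEnd ℂ) a) * hk

theorem T_diff {a : ℂ} (ha : ‖a‖ < 1) : DifferentiableOn ℂ (T a) (closedBall 0 1) := by
  unfold T
  apply DifferentiableOn.div
  · fun_prop
  · fun_prop
  · intro z hz
    exact T_den_ne ha (by simpa using hz)

/-- Any `f ∈ ℋ` with `f(0) = 0` and `f(z₀) = w₀` has the form
`f(z) = z·T_{u₀}(T_{-z₀}(z)·f*(z))` with `u₀ = w₀/z₀`, for some `f* ∈ 𝒮`. -/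
theorem dieudonne_form (z₀ w₀ : ℂ)
    (hz₀ : z₀ ∈ ball (0 : ℂ) 1) (hw₀ : w₀ ∈ ball (0 : ℂ) 1)
    (hlt : ‖w₀‖ < ‖z₀‖) (u₀ : ℂ) (hu₀ : u₀ = w₀ / z₀)
    (f : ℂ → ℂ) (hf : Hclass f) (hf0 : f 0 = 0) (hfz₀ : f z₀ = w₀) :
    ∃ fstar : ℂ → ℂ, Sclass fstar ∧
      ∀ z ∈ ball (0 : ℂ) 1, f z = z * T u₀ (T (-z₀) z * fstar z) := by
  have hz1 : ‖z₀‖ < 1 := by simpa using hz₀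
  have hzn : z₀ ≠ 0 := by
    rintro rfl
    simp at hlt
    linarith [norm_nonneg w₀]
  have hu : ‖u₀‖ < 1 := by
    rw [hu₀, norm_div, div_lt_one (norm_pos_iff.mpr hzn)]
    exact hlt
  have hu' : ‖-u₀‖ < 1 := by simpa using hu
  have hz1' : ‖-z₀‖ < 1 := by simpa using hz1
  obtain ⟨hfd, hfm⟩ := hf
  set g := dslope f 0 with hg
  have hgd : DifferentiableOn ℂ g (ball 0 1) :=
    (Complex.differentiableOn_dslope (ball_mem_nhds _ one_pos)).2 hfd
  have hgn : ∀ z ∈ ball (0 : ℂ) 1, ‖g z‖ ≤ 1 := by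
    intro z hz
    have := Complex.norm_dslope_le_div_of_mapsTo_ball (R₂ := 1) hfd
      (by rw [hf0]; exact hfm.mono_right ball_subset_closedBall) hz
    simpa using this
  have hfg : ∀ z, f z = z * g z := by
    intro z
    have := sub_smul_dslope f 0 z
    simp [hf0] at this
    exact this.symm
  have hgz : g z₀ = u₀ := by
    rw [hu₀, ← hfz₀, hfg z₀]
    field_simp
  set h : ℂ → ℂ := fun z => T (-u₀) (g z) with hh
  have hhd : DifferentiableOn ℂ h (ball 0 1) :=
    (T_diff hu').comp hgd (fun z hz => by simpa using hgn z hz)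
  have hhn : ∀ z ∈ ball (0 : ℂ) 1, ‖h z‖ ≤ 1 := fun z hz => T_norm_le hu' (hgn z hz)
  have hhz : h z₀ = 0 := by simp [hh, hgz, T]
  -- Schwarz for h ∘ T z₀
  have hmaps : Set.MapsTo (T z₀) (ball 0 1) (ball 0 1) := fun z hz => by
    simpa using T_norm_lt hz1 (by simpa using hz)
  have hS : ∀ z ∈ ball (0 : ℂ) 1, ‖h z‖ ≤ ‖T (-z₀) z‖ := by
    intro z hz
    have hzz : ‖z‖ < 1 := by simpa using hz
    have := Complex.norm_le_norm_of_mapsTo_ball (f := h ∘ T z₀) (R := 1) (z := T (-z₀) z)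
      (hhd.comp ((T_diff hz1).mono ball_subset_closedBall) hmaps)
      (fun w hw => by simpa using hhn _ (hmaps hw))
      (by simp [T, hhz]) (T_norm_lt hz1' hzz)
    simpa [T_T_neg hz1 hzz.le] using this
  have hslope : ∀ z, (z - z₀) * dslope h z₀ z = h z := by
    intro z
    have := sub_smul_dslope h z₀ z
    simpa [hhz] using this
  set F : ℂ → ℂ := fun z => (1 + (starRingEnd ℂ) (-z₀) * z) * dslope h z₀ z with hF
  have hTF : ∀ z ∈ ball (0 : ℂ) 1, T (-z₀) z * F z = h z := by
    intro z hz
    have hd := T_den_ne hz1' (z := z) (by simpa using (mem_ball_zero_iff.1 hz).le)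
    rw [← hslope z, T]
    simp only [hF]
    rw [← mul_assoc, div_mul_cancel₀ _ hd, ← sub_eq_add_neg]
  have hFd : DifferentiableOn ℂ F (ball 0 1) := by
    apply DifferentiableOn.mul
    · fun_prop
    · exact (Complex.differentiableOn_dslope (isOpen_ball.mem_nhds hz₀)).2 hhd
  have hFne : ∀ z ∈ ball (0 : ℂ) 1, z ≠ z₀ → ‖F z‖ ≤ 1 := by
    intro z hz hne
    have hd := T_den_ne hz1' (z := z) (by simpa using (mem_ball_zero_iff.1 hz).le)
    have hT : T (-z₀) z ≠ 0 := by
      unfold T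
      refine div_ne_zero ?_ hd
      rw [← sub_eq_add_neg]
      exact sub_ne_zero.2 hne
    have h1 := hS z hz
    rw [← hTF z hz, norm_mul] at h1
    exact le_of_mul_le_mul_left (by simpa using h1) (norm_pos_iff.2 hT)
  have hFz : ‖F z₀‖ ≤ 1 := by
    have hc : ContinuousAt F z₀ := (hFd.differentiableAt (isOpen_ball.mem_nhds hz₀)).continuousAt
    have ht : Filter.Tendsto (fun z => ‖F z‖) (nhdsWithin z₀ {z₀}ᶜ) (nhds ‖F z₀‖) :=
      (hc.norm.tendsto).mono_left nhdsWithin_le_nhds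
    refine le_of_tendsto ht ?_
    filter_upwards [self_mem_nhdsWithin, mem_nhdsWithin_of_mem_nhds (isOpen_ball.mem_nhds hz₀)]
      with z h1 h2
    exact hFne z h2 h1
  refine ⟨F, ⟨hFd, ?_⟩, ?_⟩
  · intro z hz
    rw [mem_closedBall_zero_iff]
    by_cases hne : z = z₀
    · rw [hne]; exact hFz
    · exact hFne z hz hne
  · intro z hz
    rw [hTF z hz, hfg z]
    simp only [hh]
    rw [T_T_neg hu (hgn z hz)]
end

section
/- Let z₀, γ₀ ∈ 𝔻 and γ₁ ∈ 𝔻. Then the set {f''(z₀) : f ∈ ℋ, f(z₀) = γ₀, H¹f(z₀) = γ₁} is exactly the closed disk centered at c₂ with radius ρ₂. -/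
open Complex Metric

/-- The (first-order) hyperbolic derivative `H¹f(z) = (1-|z|²)f'(z)/(1-|f(z)|²)`. -/
noncomputable def H1 (f : ℂ → ℂ) (z : ℂ) : ℂ :=
  ((1 - ‖z‖ ^ 2 : ℝ) : ℂ) * deriv f z / ((1 - ‖f z‖ ^ 2 : ℝ) : ℂ)

/-- Disk automorphism. -/
noncomputable def mob (a z : ℂ) : ℂ := (z + a) / (1 + (starRingEnd ℂ) a * z)

lemma mob_den {a z : ℂ} (ha : ‖a‖ < 1) (hz : ‖z‖ < 1) : 1 + (starRingEnd ℂ) a * z ≠ 0 := by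
  intro h
  have h1 : (starRingEnd ℂ) a * z = -1 := by linear_combination h
  have h2 : ‖a‖ * ‖z‖ = 1 := by
    have := congrArg norm h1
    simpa using this
  nlinarith [norm_nonneg a, norm_nonneg z]

lemma mob_norm {a z : ℂ} (ha : ‖a‖ < 1) (hz : ‖z‖ < 1) : ‖mob a z‖ < 1 := by
  have hd := mob_den ha hz
  unfold mob
  rw [norm_div, div_lt_one (norm_pos_iff.mpr hd)]
  apply lt_of_pow_lt_pow_left₀ 2 (norm_nonneg _)
  rw [← Complex.normSq_eq_norm_sq, ← Complex.normSq_eq_norm_sq]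
  have h1 : 0 < (1 - ‖a‖ ^ 2) * (1 - ‖z‖ ^ 2) := by
    apply mul_pos <;> nlinarith [norm_nonneg a, norm_nonneg z]
  rw [← Complex.normSq_eq_norm_sq, ← Complex.normSq_eq_norm_sq] at h1
  simp only [Complex.normSq_apply, Complex.add_re, Complex.add_im, Complex.mul_re, Complex.mul_im,
    Complex.conj_re, Complex.conj_im, Complex.one_re, Complex.one_im] at h1 ⊢
  nlinarith

lemma conj_self_ne {a : ℂ} (ha : ‖a‖ < 1) : 1 - (starRingEnd ℂ) a * a ≠ 0 := by
  have := mob_den (a := a) (z := -a) ha (by simpa using ha)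
  simpa [sub_eq_add_neg] using this

lemma one_sub_cast (a : ℂ) : ((1 - ‖a‖ ^ 2 : ℝ) : ℂ) = 1 - (starRingEnd ℂ) a * a := by
  rw [Complex.conj_mul']
  push_cast
  rfl

lemma mob_inv {a z : ℂ} (ha : ‖a‖ < 1) (hz : ‖z‖ < 1) : mob a (mob (-a) z) = z := by
  have h1 := mob_den (a := -a) (by simpa using ha) hz
  have h2 := mob_den ha (mob_norm (a := -a) (by simpa using ha) hz)
  have h3 := conj_self_ne ha
  unfold mob at h2 ⊢
  rw [div_eq_iff h2]
  have h4 : 1 + (starRingEnd ℂ) (-a) * z = 1 - (starRingEnd ℂ) a * z := by simp; ring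
  rw [h4] at h1 ⊢
  have ht := div_mul_cancel₀ (z + -a) h1
  apply mul_left_cancel₀ h1
  linear_combination (1 - (starRingEnd ℂ) a * z) * ht

lemma mob_deriv {a z : ℂ} (ha : ‖a‖ < 1) (hz : ‖z‖ < 1) :
    HasDerivAt (mob a) ((1 - (starRingEnd ℂ) a * a) / (1 + (starRingEnd ℂ) a * z) ^ 2) z := by
  have h1 := mob_den ha hz
  have := ((hasDerivAt_id z).add_const a).div
    (((hasDerivAt_id z).const_mul ((starRingEnd ℂ) a)).const_add 1) h1
  refine this.congr_deriv ?_
  simp only [id]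
  ring

lemma mob_zero (a : ℂ) : mob a 0 = a := by simp [mob]
lemma mob_neg_self (a : ℂ) : mob (-a) a = 0 := by simp [mob]

/-- the normalized composite -/
lemma comp_H {f : ℂ → ℂ} (hf : Hclass f) {z₀ : ℂ} (hz : ‖z₀‖ < 1) :
    DifferentiableOn ℂ (fun w => mob (-(f z₀)) (f (mob z₀ w))) (ball 0 1) ∧
    Set.MapsTo (fun w => mob (-(f z₀)) (f (mob z₀ w))) (ball 0 1) (ball 0 1) := by
  have hγ : ‖-(f z₀)‖ < 1 := by
    have := hf.2 (show z₀ ∈ ball (0:ℂ) 1 by simpa using hz)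
    simpa using this
  have hm : ∀ w ∈ ball (0:ℂ) 1, mob z₀ w ∈ ball (0:ℂ) 1 := fun w hw => by
    have := mob_norm hz (z := w) (by simpa using hw)
    simpa using this
  constructor
  · intro w hw
    have h2 := hf.2 (hm w hw)
    have h3 := (mob_deriv hγ (z := f (mob z₀ w)) (by simpa using h2)).differentiableAt
    have h4 := hf.1.differentiableAt (isOpen_ball.mem_nhds (hm w hw))
    have h5 := (mob_deriv hz (z := w) (by simpa using hw)).differentiableAt
    exact (h3.comp w (h4.comp w h5)).differentiableWithinAt
  · intro w hw
    have h2 := hf.2 (hm w hw)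
    have := mob_norm hγ (z := f (mob z₀ w)) (by simpa using h2)
    simpa using this

lemma sp_dist {f : ℂ → ℂ} (hf : Hclass f) {z₀ z : ℂ} (hz₀ : ‖z₀‖ < 1) (hz : ‖z‖ < 1) :
    ‖mob (-(f z₀)) (f z)‖ ≤ ‖mob (-z₀) z‖ := by
  obtain ⟨h1, h2⟩ := comp_H hf hz₀
  have hm := mob_norm (a := -z₀) (by simpa using hz₀) hz
  have := Complex.norm_le_norm_of_mapsTo_ball h1 (h2.mono_right ball_subset_closedBall)
    (by simp [mob_zero, mob_neg_self]) hm
  simpa only [mob_inv hz₀ hz] using this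

lemma sp_deriv {f : ℂ → ℂ} (hf : Hclass f) {z₀ : ℂ} (hz₀ : ‖z₀‖ < 1) :
    ‖deriv f z₀‖ * (1 - ‖z₀‖ ^ 2) ≤ 1 - ‖f z₀‖ ^ 2 := by
  obtain ⟨h1, h2⟩ := comp_H hf hz₀
  have hzb : z₀ ∈ ball (0:ℂ) 1 := by simpa using hz₀
  have hγ : ‖f z₀‖ < 1 := by simpa using hf.2 hzb
  have key := Complex.norm_deriv_le_one_of_mapsTo_ball h1
    (by simpa [mob_zero, mob_neg_self] using h2.mono_right ball_subset_closedBall) one_pos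
  have d1 := mob_deriv hz₀ (z := 0) (by simp)
  have d2 := (hf.1.differentiableAt (isOpen_ball.mem_nhds hzb)).hasDerivAt
  have d3 := mob_deriv (a := -(f z₀)) (by simpa using hγ) (z := f z₀) hγ
  rw [← mob_zero z₀] at d2
  have d4 := d2.comp (0:ℂ) d1
  have d5 := HasDerivAt.comp (0:ℂ) (h₂ := mob (-(f z₀))) (by simpa [mob_zero] using d3) d4
  have d6 := d5.deriv
  simp only [Function.comp_def] at d6
  rw [d6] at key
  have e1 : 1 + (starRingEnd ℂ) (-(f z₀)) * f z₀ = ((1 - ‖f z₀‖ ^ 2 : ℝ) : ℂ) := by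
    rw [one_sub_cast]; simp; ring
  have p1 : 0 < 1 - ‖f z₀‖ ^ 2 := by nlinarith [norm_nonneg (f z₀)]
  have p2 : 0 < 1 - ‖z₀‖ ^ 2 := by nlinarith [norm_nonneg z₀]
  simp only [mob_zero] at key
  have e2 : 1 - (starRingEnd ℂ) (f z₀) * f z₀ = ((1 - ‖f z₀‖ ^ 2 : ℝ) : ℂ) := (one_sub_cast _).symm
  have e3 : 1 + -((starRingEnd ℂ) (f z₀) * f z₀) = ((1 - ‖f z₀‖ ^ 2 : ℝ) : ℂ) := by
    rw [one_sub_cast]; ring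
  have e4 : 1 - (starRingEnd ℂ) z₀ * z₀ = ((1 - ‖z₀‖ ^ 2 : ℝ) : ℂ) := (one_sub_cast _).symm
  simp only [e2, e3, e4, mul_zero, add_zero, one_pow, div_one,
    norm_mul, norm_div, norm_pow, Complex.norm_real, Real.norm_of_nonneg p1.le,
    Real.norm_of_nonneg p2.le] at key
  rw [sq (1 - ‖f z₀‖ ^ 2), div_mul_eq_div_div, div_self p1.ne', one_div_mul_eq_div, div_le_one p1] at key
  exact key

lemma key_calc {f q : ℂ → ℂ} {z₀ : ℂ} {b c : ℂ} (hf : AnalyticAt ℂ f z₀) (hq : AnalyticAt ℂ q z₀)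
    (h : ∀ᶠ z in nhds z₀, (f z - f z₀) * (1 - b * z) = (z - z₀) * ((1 - c * f z) * q z)) :
    deriv f z₀ * (1 - b * z₀) = (1 - c * f z₀) * q z₀ ∧
    iteratedDeriv 2 f z₀ * (1 - b * z₀) = 2 * b * deriv f z₀ +
      2 * (-c * deriv f z₀ * q z₀ + (1 - c * f z₀) * deriv q z₀) := by
  have dF : ∀ z, DifferentiableAt ℂ f z → HasDerivAt (fun z => (f z - f z₀) * (1 - b * z))
      (deriv f z * (1 - b * z) + (f z - f z₀) * (-b)) z := by
    intro z hz
    have := (hz.hasDerivAt.sub_const (f z₀)).mul (((hasDerivAt_id z).const_mul b).const_sub 1)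
    refine this.congr_deriv ?_
    simp
  have dR : ∀ z, DifferentiableAt ℂ f z → DifferentiableAt ℂ q z →
      HasDerivAt (fun z => (1 - c * f z) * q z)
      (-(c * deriv f z) * q z + (1 - c * f z) * deriv q z) z := by
    intro z hz hz'
    exact ((hz.hasDerivAt.const_mul c).const_sub 1).mul hz'.hasDerivAt
  have dG : ∀ z, DifferentiableAt ℂ f z → DifferentiableAt ℂ q z →
      HasDerivAt (fun z => (z - z₀) * ((1 - c * f z) * q z))
      ((1 - c * f z) * q z + (z - z₀) * (-(c * deriv f z) * q z + (1 - c * f z) * deriv q z)) z := by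
    intro z hz hz'
    have := ((hasDerivAt_id z).sub_const z₀).mul (dR z hz hz')
    refine this.congr_deriv ?_
    simp
  have ev : ∀ᶠ z in nhds z₀, deriv f z * (1 - b * z) + (f z - f z₀) * (-b) =
      (1 - c * f z) * q z + (z - z₀) * (-(c * deriv f z) * q z + (1 - c * f z) * deriv q z) := by
    filter_upwards [h.eventually_nhds, hf.eventually_analyticAt, hq.eventually_analyticAt]
      with z hz h1 h2
    have := Filter.EventuallyEq.deriv_eq hz
    rwa [(dF z h1.differentiableAt).deriv,
      (dG z h1.differentiableAt h2.differentiableAt).deriv] at this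
  have e0 := ev.self_of_nhds
  simp only [sub_self, zero_mul, add_zero] at e0
  refine ⟨e0, ?_⟩
  have f1 := hf.differentiableAt
  have q1 := hq.differentiableAt
  have f2 := hf.deriv.differentiableAt
  have q2 := hq.deriv.differentiableAt
  have dL2 := (f2.hasDerivAt.mul (((hasDerivAt_id z₀).const_mul b).const_sub 1)).add
    ((f1.hasDerivAt.sub_const (f z₀)).mul_const (-b))
  have hS : DifferentiableAt ℂ
      (fun z => -(c * deriv f z) * q z + (1 - c * f z) * deriv q z) z₀ := by fun_prop
  have dR2 := (dR z₀ f1 q1).add (((hasDerivAt_id z₀).sub_const z₀).mul hS.hasDerivAt)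
  have := Filter.EventuallyEq.deriv_eq ev
  have t1 := dL2.deriv
  have t2 := dR2.deriv
  have t3 := (t1.symm.trans this).trans t2
  simp only [id, sub_self, zero_mul, add_zero] at t3
  rw [iteratedDeriv_succ, iteratedDeriv_one]
  linear_combination t3

/-- Schwarz-Pick Lemma of second derivative: the variability region of `f''(z₀)` over
all `f ∈ ℋ` with `f(z₀) = γ₀` and `H¹f(z₀) = γ₁` is the closed disk with center
`c₂ = 2(1-|γ₀|²)(conj z₀ - conj γ₀ · γ₁)γ₁/(1-|z₀|²)²` and radius
`ρ₂ = 2(1-|γ₀|²)(1-|γ₁|²)/(1-|z₀|²)²`. -/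
theorem schwarz_pick_second_variability (z₀ γ₀ γ₁ : ℂ)
    (hz₀ : z₀ ∈ ball (0 : ℂ) 1) (hγ₀ : γ₀ ∈ ball (0 : ℂ) 1)
    (hγ₁ : γ₁ ∈ ball (0 : ℂ) 1) :
    {w : ℂ | ∃ f : ℂ → ℂ, Hclass f ∧ f z₀ = γ₀ ∧ H1 f z₀ = γ₁ ∧
        iteratedDeriv 2 f z₀ = w} =
      closedBall
        (2 * ((1 - ‖γ₀‖ ^ 2 : ℝ) : ℂ) / ((1 - ‖z₀‖ ^ 2 : ℝ) : ℂ) ^ 2 *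
          ((starRingEnd ℂ) z₀ - (starRingEnd ℂ) γ₀ * γ₁) * γ₁)
        (2 * (1 - ‖γ₀‖ ^ 2) * (1 - ‖γ₁‖ ^ 2) / (1 - ‖z₀‖ ^ 2) ^ 2) := by
  have hz : ‖z₀‖ < 1 := by simpa using hz₀
  have hg : ‖γ₀‖ < 1 := by simpa using hγ₀
  have hg1 : ‖γ₁‖ < 1 := by simpa using hγ₁
  have nz := conj_self_ne hz
  have ng := conj_self_ne hg
  have ng1 := conj_self_ne hg1
  have pz : 0 < 1 - ‖z₀‖ ^ 2 := by nlinarith [norm_nonneg z₀]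
  have pg : 0 < 1 - ‖γ₀‖ ^ 2 := by nlinarith [norm_nonneg γ₀]
  have pg1 : 0 < 1 - ‖γ₁‖ ^ 2 := by nlinarith [norm_nonneg γ₁]
  have nrm : ∀ a : ℂ, 0 < 1 - ‖a‖ ^ 2 → ‖1 - (starRingEnd ℂ) a * a‖ = 1 - ‖a‖ ^ 2 := by
    intro a ha
    rw [← one_sub_cast, Complex.norm_real, Real.norm_of_nonneg ha.le]
  have nb : ball (0:ℂ) 1 ∈ nhds z₀ := isOpen_ball.mem_nhds hz₀
  have hzn : ‖-z₀‖ < 1 := by simpa using hz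
  have hgn : ‖-γ₀‖ < 1 := by simpa using hg
  ext w
  simp only [Set.mem_ofPred_eq, mem_closedBall, dist_eq_norm]
  rw [one_sub_cast, one_sub_cast]
  constructor
  · rintro ⟨f, hf, hf0, hf1, rfl⟩
    set g : ℂ → ℂ := fun z => mob (-γ₀) (f z) with hgdef
    have hgd : DifferentiableOn ℂ g (ball 0 1) := by
      intro z hzz
      have h2 := hf.2 hzz
      have h3 := (mob_deriv hgn (z := f z) (by simpa using h2)).differentiableAt
      exact (h3.comp z (hf.1.differentiableAt (isOpen_ball.mem_nhds hzz))).differentiableWithinAt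
    set q : ℂ → ℂ := fun z => (1 - (starRingEnd ℂ) z₀ * z) * dslope g z₀ z with hqdef
    have hqd : DifferentiableOn ℂ q (ball 0 1) := by
      have := (Complex.differentiableOn_dslope nb).mpr hgd
      exact DifferentiableOn.mul (by fun_prop) this
    have g0 : g z₀ = 0 := by simp [hgdef, hf0, mob_neg_self]
    have hid : ∀ z, (z - z₀) * q z = (1 - (starRingEnd ℂ) z₀ * z) * g z := by
      intro z
      have := sub_smul_dslope g z₀ z
      rw [smul_eq_mul, g0] at this
      simp only [hqdef]
      linear_combination (1 - (starRingEnd ℂ) z₀ * z) * this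
    have hid2 : ∀ᶠ z in nhds z₀, (f z - f z₀) * (1 - (starRingEnd ℂ) z₀ * z) =
        (z - z₀) * ((1 - (starRingEnd ℂ) γ₀ * f z) * q z) := by
      filter_upwards [nb] with z hzz
      have h2 : ‖f z‖ < 1 := by simpa using hf.2 hzz
      have h3 := mob_den hgn h2
      have h4 : g z * (1 + (starRingEnd ℂ) (-γ₀) * f z) = f z + -γ₀ := by
        simp only [hgdef, mob]; rw [div_mul_cancel₀ _ h3]
      rw [map_neg] at h4
      rw [hf0]
      linear_combination (-(1 - (starRingEnd ℂ) γ₀ * f z)) * hid z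
        - (1 - (starRingEnd ℂ) z₀ * z) * h4
    obtain ⟨k1, k2⟩ := key_calc (hf.1.analyticAt nb) (hqd.analyticAt nb) hid2
    have hd : deriv f z₀ * (1 - (starRingEnd ℂ) z₀ * z₀) = γ₁ * (1 - (starRingEnd ℂ) γ₀ * γ₀) := by
      unfold H1 at hf1
      rw [hf0, one_sub_cast, one_sub_cast, div_eq_iff ng] at hf1
      linear_combination hf1
    rw [hf0] at k1 k2
    have q0 : q z₀ = γ₁ := by
      apply mul_left_cancel₀ ng
      linear_combination hd - k1
    have hq1 : ∀ z ∈ ball (0:ℂ) 1, ‖q z‖ ≤ 1 := by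
      intro z hzz
      have hz1 : ‖z‖ < 1 := by simpa using hzz
      by_cases hne : z = z₀
      · rw [hne, q0]; exact hg1.le
      have h1 := sp_dist hf hz hz1
      rw [hf0] at h1
      have h2 := mob_den hzn hz1
      have h3 : ‖1 - (starRingEnd ℂ) z₀ * z‖ * ‖mob (-z₀) z‖ = ‖z - z₀‖ := by
        rw [← norm_mul]
        congr 1
        unfold mob
        have e : 1 + (starRingEnd ℂ) (-z₀) * z = 1 - (starRingEnd ℂ) z₀ * z := by simp; ring
        rw [e] at h2 ⊢
        rw [mul_div_cancel₀ _ h2]; ring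
      have h4 := congrArg norm (hid z)
      rw [norm_mul (z - z₀) (q z), norm_mul (1 - (starRingEnd ℂ) z₀ * z) (g z)] at h4
      have h5 : 0 < ‖z - z₀‖ := norm_pos_iff.mpr (sub_ne_zero.mpr hne)
      have h6 : ‖z - z₀‖ * ‖q z‖ ≤ ‖z - z₀‖ * 1 := by
        rw [h4, mul_one, ← h3]
        exact mul_le_mul_of_nonneg_left h1 (norm_nonneg _)
      exact le_of_mul_le_mul_left h6 h5
    have hqH : Hclass q := by
      refine ⟨hqd, fun z hzz => ?_⟩
      rw [mem_ball_zero_iff]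
      refine lt_of_le_of_ne (hq1 z hzz) fun heq => ?_
      have := Complex.norm_eqOn_of_isPreconnected_of_isMaxOn (convex_ball (0:ℂ) 1).isPreconnected
        isOpen_ball hqd hzz (fun y hy => by simpa [heq] using hq1 y hy) hz₀
      simp only [Function.comp, Function.const, q0, heq] at this
      linarith
    have hb := sp_deriv hqH hz
    rw [q0] at hb
    have e : iteratedDeriv 2 f z₀ - 2 * (1 - (starRingEnd ℂ) γ₀ * γ₀) /
        (1 - (starRingEnd ℂ) z₀ * z₀) ^ 2 *
          ((starRingEnd ℂ) z₀ - (starRingEnd ℂ) γ₀ * γ₁) * γ₁ =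
        2 * (1 - (starRingEnd ℂ) γ₀ * γ₀) / (1 - (starRingEnd ℂ) z₀ * z₀) * deriv q z₀ := by
      rw [q0] at k2
      have k3 := eq_div_of_mul_eq nz k2
      have k4 := eq_div_of_mul_eq nz hd
      rw [k3, k4]
      field_simp
      ring
    rw [e]
    simp only [norm_mul, norm_div, nrm _ pz, nrm _ pg, Complex.norm_ofNat]
    rw [div_mul_eq_mul_div, div_le_div_iff₀ pz (by positivity)]
    have : 0 ≤ 2 * (1 - ‖γ₀‖ ^ 2) * (1 - ‖z₀‖ ^ 2) := by positivity
    nlinarith [mul_le_mul_of_nonneg_left hb this]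
  · intro hw
    obtain ⟨δ, hδ, hwδ⟩ : ∃ δ : ℂ, ‖δ‖ ≤ 1 ∧ w = 2 * (1 - (starRingEnd ℂ) γ₀ * γ₀) /
        (1 - (starRingEnd ℂ) z₀ * z₀) ^ 2 *
          ((starRingEnd ℂ) z₀ - (starRingEnd ℂ) γ₀ * γ₁) * γ₁ +
        2 * (1 - (starRingEnd ℂ) γ₀ * γ₀) * (1 - (starRingEnd ℂ) γ₁ * γ₁) /
          (1 - (starRingEnd ℂ) z₀ * z₀) ^ 2 * δ := by
      set c := 2 * (1 - (starRingEnd ℂ) γ₀ * γ₀) /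
        (1 - (starRingEnd ℂ) z₀ * z₀) ^ 2 *
          ((starRingEnd ℂ) z₀ - (starRingEnd ℂ) γ₀ * γ₁) * γ₁ with hc
      refine ⟨(w - c) / (2 * (1 - (starRingEnd ℂ) γ₀ * γ₀) * (1 - (starRingEnd ℂ) γ₁ * γ₁) /
          (1 - (starRingEnd ℂ) z₀ * z₀) ^ 2), ?_, ?_⟩
      · rw [norm_div]
        apply div_le_one_of_le₀ _ (norm_nonneg _)
        simpa only [norm_mul, norm_div, norm_pow, nrm _ pz, nrm _ pg, nrm _ pg1,
          Complex.norm_ofNat] using hw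
      · rw [mul_div_cancel₀]
        · ring
        · exact div_ne_zero (mul_ne_zero (mul_ne_zero two_ne_zero ng) ng1) (pow_ne_zero 2 nz)
    set q : ℂ → ℂ := fun z => mob γ₁ (δ * mob (-z₀) z) with hqdef
    set f : ℂ → ℂ := fun z => mob γ₀ (mob (-z₀) z * q z) with hfdef
    have b1 : ∀ z ∈ ball (0:ℂ) 1, ‖mob (-z₀) z‖ < 1 := fun z hzz =>
      mob_norm hzn (by simpa using hzz)
    have b2 : ∀ z ∈ ball (0:ℂ) 1, ‖δ * mob (-z₀) z‖ < 1 := fun z hzz => by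
      rw [norm_mul]
      nlinarith [b1 z hzz, norm_nonneg δ, norm_nonneg (mob (-z₀) z)]
    have b3 : ∀ z ∈ ball (0:ℂ) 1, ‖q z‖ < 1 := fun z hzz => mob_norm hg1 (b2 z hzz)
    have b4 : ∀ z ∈ ball (0:ℂ) 1, ‖mob (-z₀) z * q z‖ < 1 := fun z hzz => by
      rw [norm_mul]
      nlinarith [b1 z hzz, b3 z hzz, norm_nonneg (q z), norm_nonneg (mob (-z₀) z)]
    have d1 : ∀ z ∈ ball (0:ℂ) 1, DifferentiableAt ℂ (mob (-z₀)) z := fun z hzz =>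
      (mob_deriv hzn (by simpa using hzz)).differentiableAt
    have d2 : ∀ z ∈ ball (0:ℂ) 1, DifferentiableAt ℂ q z := fun z hzz =>
      DifferentiableAt.comp (g := mob γ₁) z (mob_deriv hg1 (b2 z hzz)).differentiableAt
        ((d1 z hzz).const_mul δ)
    have d3 : ∀ z ∈ ball (0:ℂ) 1, DifferentiableAt ℂ f z := fun z hzz =>
      DifferentiableAt.comp (g := mob γ₀) (f := fun z => mob (-z₀) z * q z) z (mob_deriv hg (b4 z hzz)).differentiableAt
        ((d1 z hzz).mul (d2 z hzz))
    have fd : DifferentiableOn ℂ f (ball 0 1) := fun z hzz => (d3 z hzz).differentiableWithinAt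
    have qd : DifferentiableOn ℂ q (ball 0 1) := fun z hzz => (d2 z hzz).differentiableWithinAt
    have q0 : q z₀ = γ₁ := by simp [hqdef, mob_neg_self, mob_zero]
    have f0 : f z₀ = γ₀ := by simp [hfdef, mob_neg_self, mob_zero]
    have q1 : deriv q z₀ = (1 - (starRingEnd ℂ) γ₁ * γ₁) * δ / (1 - (starRingEnd ℂ) z₀ * z₀) := by
      have t1 := (mob_deriv hzn hz).const_mul δ
      have t2 := mob_deriv hg1 (b2 z₀ hz₀)
      have t3 := (HasDerivAt.comp z₀ t2 t1).deriv
      have t4 : deriv q z₀ = _ := t3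
      rw [t4, mob_neg_self]
      have e : 1 + (starRingEnd ℂ) (-z₀) * z₀ = 1 - (starRingEnd ℂ) z₀ * z₀ := by simp; ring
      have e' : 1 - (starRingEnd ℂ) (-z₀) * (-z₀) = 1 - (starRingEnd ℂ) z₀ * z₀ := by simp
      rw [e, e']
      simp only [mul_zero, add_zero, one_pow, div_one]
      field_simp
    have hid2 : ∀ᶠ z in nhds z₀, (f z - f z₀) * (1 - (starRingEnd ℂ) z₀ * z) =
        (z - z₀) * ((1 - (starRingEnd ℂ) γ₀ * f z) * q z) := by
      filter_upwards [nb] with z hzz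
      rw [f0]
      have h1 := mob_den hzn (z := z) (by simpa using hzz)
      have h2 := mob_den hg (b4 z hzz)
      have h3 : mob (-z₀) z * (1 + (starRingEnd ℂ) (-z₀) * z) = z + -z₀ := by
        rw [mob, div_mul_cancel₀ _ h1]
      have h4 : f z * (1 + (starRingEnd ℂ) γ₀ * (mob (-z₀) z * q z)) =
          mob (-z₀) z * q z + γ₀ := by
        simp only [hfdef]
        rw [mob, div_mul_cancel₀ _ h2]
      rw [map_neg] at h3
      linear_combination (1 - (starRingEnd ℂ) z₀ * z) * h4 +
        (1 - (starRingEnd ℂ) γ₀ * f z) * q z * h3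
    obtain ⟨k1, k2⟩ := key_calc (fd.analyticAt nb) (qd.analyticAt nb) hid2
    rw [f0, q0] at k1 k2
    refine ⟨f, ⟨fd, fun z hzz => ?_⟩, f0, ?_, ?_⟩
    · rw [mem_ball_zero_iff]
      exact mob_norm hg (b4 z hzz)
    · unfold H1
      rw [f0, one_sub_cast, one_sub_cast, div_eq_iff ng]
      linear_combination k1
    · rw [hwδ]
      rw [q1] at k2
      have k3 := eq_div_of_mul_eq nz k2
      have k4 := eq_div_of_mul_eq nz k1
      rw [k3, k4]
      field_simp
      ring
end

section
/- For every n ≥ 2, the quantity F_n(γ₁, …, γ_{n−1}, γ_n) − (1 − |γ₁|²)·(1 − |γ₂|²)···(1 − |γ_{n−1}|²)·γ_n does not depend on γ_n; that is, for all γ₁, …, γ_{n−1} ∈ ℂ and all γ_n, γ_n' ∈ ℂ, F_n(γ₁, …, γ_{n−1}, γ_n) − (∏_{k=1}^{n−1}(1 − |γ_k|²))·γ_n = F_n(γ₁, …, γ_{n−1}, γ_n') − (∏_{k=1}^{n−1}(1 − |γ_k|²))·γ_n'. -/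
open Complex

/-- The functions `F_n` of `n` complex variables (given as a sequence `γ` with `γ i`
standing for `γ_{i+1}`): `F₁(γ₁) = γ₁`, `F₂(γ₁,γ₂) = (1-|γ₁|²)γ₂`, and for `n ≥ 3`,
`F_n(γ₁,…,γ_n) = (1-|γ₁|²)F_{n-1}(γ₂,…,γ_n)
  - conj(γ₁)·∑_{k=2}^{n-1} F_{n-k}(γ₂,…,γ_{n-k+1})·F_k(γ₁,…,γ_k)`. -/
noncomputable def F : ℕ → (ℕ → ℂ) → ℂ
  | 0, _ => 0
  | 1, γ => γ 0
  | 2, γ => (1 - (‖γ 0‖ : ℂ) ^ 2) * γ 1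
  | n + 3, γ =>
      (1 - (‖γ 0‖ : ℂ) ^ 2) * F (n + 2) (fun i => γ (i + 1)) -
        (starRingEnd ℂ) (γ 0) *
          ∑ k ∈ (Finset.Icc 2 (n + 2)).attach,
            F (n + 3 - k.1) (fun i => γ (i + 1)) * F k.1 γ
termination_by n _ => n
decreasing_by
  all_goals first
    | omega
    | (have := Finset.mem_Icc.mp k.2; omega)

theorem F_congr_aux (n : ℕ) : ∀ (γ δ : ℕ → ℂ), (∀ i < n, γ i = δ i) → F n γ = F n δ := by
  induction n using Nat.strong_induction_on with
  | _ n ih =>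
    intro γ δ h
    match n, ih, h with
    | 0, _, _ => simp [F]
    | 1, _, h => simp [F, h 0]
    | 2, _, h => simp [F, h 0, h 1]
    | n + 3, ih, h =>
      rw [F, F, h 0 (by omega),
        ih (n + 2) (by omega) (fun i => γ (i + 1)) (fun i => δ (i + 1))
          (fun i hi => h (i + 1) (by omega))]
      congr 2
      refine Finset.sum_congr rfl fun k _ => ?_
      have hk := Finset.mem_Icc.mp k.2
      rw [ih (n + 3 - k.1) (by omega) (fun i => γ (i + 1)) (fun i => δ (i + 1))
          (fun i hi => h (i + 1) (by omega)),
        ih k.1 (by omega) γ δ (fun i hi => h i (by omega))]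

theorem F_diff_aux (n : ℕ) : ∀ (γ δ : ℕ → ℂ), (∀ i < n + 1, γ i = δ i) →
    F (n + 2) γ - F (n + 2) δ =
      (∏ k ∈ Finset.range (n + 1), (1 - (‖γ k‖ : ℂ) ^ 2)) * (γ (n + 1) - δ (n + 1)) := by
  induction n with
  | zero =>
    intro γ δ h
    simp [F, h 0]
    ring
  | succ n ih =>
    intro γ δ h
    have e := ih (fun i => γ (i + 1)) (fun i => δ (i + 1)) (fun i hi => h (i + 1) (by omega))
    have hs : ∑ k ∈ (Finset.Icc 2 (n + 2)).attach,
            F (n + 3 - k.1) (fun i => γ (i + 1)) * F k.1 γ =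
        ∑ k ∈ (Finset.Icc 2 (n + 2)).attach,
            F (n + 3 - k.1) (fun i => δ (i + 1)) * F k.1 δ := by
      refine Finset.sum_congr rfl fun k _ => ?_
      have hk := Finset.mem_Icc.mp k.2
      rw [F_congr_aux (n + 3 - k.1) (fun i => γ (i + 1)) (fun i => δ (i + 1))
          (fun i hi => h (i + 1) (by omega)),
        F_congr_aux k.1 γ δ (fun i hi => h i (by omega))]
    rw [show n + 1 + 2 = n + 3 from rfl, F, F, hs, Finset.prod_range_succ', ← h 0 (by omega)]
    linear_combination (1 - (‖γ 0‖ : ℂ) ^ 2) * e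

/-- Schur's recurrence relation: for `n ≥ 2`, the quantity
`F_n(γ₁,…,γ_n) - (1-|γ₁|²)⋯(1-|γ_{n-1}|²)·γ_n` does not depend on `γ_n`. -/
theorem F_sub_leading_indep (n : ℕ) (hn : 2 ≤ n) (γ : ℕ → ℂ) (a b : ℂ) :
    F n (Function.update γ (n - 1) a) -
        (∏ k ∈ Finset.range (n - 1), (1 - (‖γ k‖ : ℂ) ^ 2)) * a =
      F n (Function.update γ (n - 1) b) -
        (∏ k ∈ Finset.range (n - 1), (1 - (‖γ k‖ : ℂ) ^ 2)) * b := by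
  obtain ⟨m, rfl⟩ := Nat.exists_eq_add_of_le' hn
  rw [show m + 2 - 1 = m + 1 from rfl]
  have e := F_diff_aux m (Function.update γ (m + 1) a) (Function.update γ (m + 1) b)
    (fun i hi => by
      rw [Function.update_of_ne (by omega), Function.update_of_ne (by omega)])
  have hp : ∏ k ∈ Finset.range (m + 1), (1 - (‖Function.update γ (m + 1) a k‖ : ℂ) ^ 2) =
      ∏ k ∈ Finset.range (m + 1), (1 - (‖γ k‖ : ℂ) ^ 2) := by
    refine Finset.prod_congr rfl fun k hk => ?_
    have := Finset.mem_range.mp hk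
    rw [Function.update_of_ne (by omega)]
  rw [hp, Function.update_self, Function.update_self] at e
  linear_combination e
end

section
/- Let z₀, γ₀ ∈ 𝔻 and γ₁, γ₂ ∈ 𝔻. Then there exists c ∈ ℂ such that the set {f'''(z₀) : f ∈ ℋ, f(z₀) = γ₀, H¹f(z₀) = γ₁, H²f(z₀) = γ₂} is exactly the closed disk centered at c with radius ρ₃ := 6(1 − |γ₀|²)(1 − |γ₁|²)(1 − |γ₂|²)/(1 − |z₀|²)³. -/
open Complex Metric

/-- The second Peschl invariant derivative `D₂f(z)`. -/
noncomputable def D2 (f : ℂ → ℂ) (z : ℂ) : ℂ :=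
  ((1 - ‖z‖ ^ 2 : ℝ) : ℂ) ^ 2 / ((1 - ‖f z‖ ^ 2 : ℝ) : ℂ) *
    (iteratedDeriv 2 f z - 2 * (starRingEnd ℂ) z * deriv f z / ((1 - ‖z‖ ^ 2 : ℝ) : ℂ) +
      2 * (starRingEnd ℂ) (f z) * (deriv f z) ^ 2 / ((1 - ‖f z‖ ^ 2 : ℝ) : ℂ))

/-- The second-order hyperbolic derivative `H²f(z) = D₂f(z)/(2(1-|H¹f(z)|²))`. -/
noncomputable def H2 (f : ℂ → ℂ) (z : ℂ) : ℂ :=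
  D2 f z / (2 * ((1 - ‖H1 f z‖ ^ 2 : ℝ) : ℂ))


open scoped ComplexConjugate in
lemma sp_mob_id (a b : ℂ) :
    ‖1 - conj a * b‖ ^ 2 - ‖b - a‖ ^ 2 = (1 - ‖a‖ ^ 2) * (1 - ‖b‖ ^ 2) := by
  simp only [← Complex.normSq_eq_norm_sq, Complex.normSq_apply]
  simp
  ring

open scoped ComplexConjugate in
lemma sp_ne {a b : ℂ} (ha : ‖a‖ < 1) (hb : ‖b‖ ≤ 1) : 1 - conj a * b ≠ 0 := by
  intro h
  have h1 : conj a * b = 1 := (sub_eq_zero.1 h).symm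
  have h2 : ‖conj a * b‖ = 1 := by rw [h1]; simp
  rw [norm_mul, RCLike.norm_conj] at h2
  nlinarith [norm_nonneg a, norm_nonneg b]

open scoped ComplexConjugate in
lemma sp_mob_le {a b : ℂ} (ha : ‖a‖ < 1) (hb : ‖b‖ ≤ 1) :
    ‖(b - a) / (1 - conj a * b)‖ ≤ 1 := by
  rw [norm_div]
  apply div_le_one_of_le₀ _ (norm_nonneg _)
  apply le_of_sq_le_sq _ (norm_nonneg _)
  have h := sp_mob_id a b
  have : 0 ≤ (1 - ‖a‖ ^ 2) * (1 - ‖b‖ ^ 2) :=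
    mul_nonneg (by nlinarith [norm_nonneg a]) (by nlinarith [norm_nonneg b])
  linarith

open scoped ComplexConjugate in
lemma sp_mob_lt {a b : ℂ} (ha : ‖a‖ < 1) (hb : ‖b‖ < 1) :
    ‖(b - a) / (1 - conj a * b)‖ < 1 := by
  rw [norm_div, div_lt_one (norm_pos_iff.2 (sp_ne ha hb.le))]
  apply lt_of_pow_lt_pow_left₀ 2 (norm_nonneg _)
  have h := sp_mob_id a b
  have : 0 < (1 - ‖a‖ ^ 2) * (1 - ‖b‖ ^ 2) :=
    mul_pos (by nlinarith [norm_nonneg a]) (by nlinarith [norm_nonneg b])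
  linarith

lemma sp_deriv_eq {A B : ℂ → ℂ} {A' B' z : ℂ} {U : Set ℂ} (hU : IsOpen U) (hz : z ∈ U)
    (h : ∀ w ∈ U, A w = B w) (hA : HasDerivAt A A' z) (hB : HasDerivAt B B' z) : A' = B' := by
  have : A =ᶠ[nhds z] B := by
    filter_upwards [hU.mem_nhds hz] with w hw using h w hw
  exact (hA.congr_of_eventuallyEq this.symm).unique hB

lemma sp_derivs {F G : ℂ → ℂ} {z₀ a c γ : ℂ} {U : Set ℂ} (hU : IsOpen U) (hz : z₀ ∈ U)
    (hF : DifferentiableOn ℂ F U) (hG : DifferentiableOn ℂ G U) (hγ : F z₀ = γ)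
    (h : ∀ z ∈ U, (F z - γ) * (1 - a * z) = (z - z₀) * ((1 - c * F z) * G z)) :
    deriv F z₀ * (1 - a * z₀) = (1 - c * γ) * G z₀ ∧
    iteratedDeriv 2 F z₀ * (1 - a * z₀) - 2 * a * deriv F z₀ =
      2 * ((1 - c * γ) * deriv G z₀ - c * deriv F z₀ * G z₀) ∧
    iteratedDeriv 3 F z₀ * (1 - a * z₀) - 3 * a * iteratedDeriv 2 F z₀ =
      3 * ((1 - c * γ) * iteratedDeriv 2 G z₀ - 2 * c * deriv F z₀ * deriv G z₀
        - c * iteratedDeriv 2 F z₀ * G z₀) := by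
  have e2 : ∀ f : ℂ → ℂ, iteratedDeriv 2 f = deriv (deriv f) := fun f => by
    rw [iteratedDeriv_succ, iteratedDeriv_one]
  have e3 : ∀ f : ℂ → ℂ, iteratedDeriv 3 f = deriv (deriv (deriv f)) := fun f => by
    rw [iteratedDeriv_succ, e2]
  simp only [e2, e3]
  have d0 : ∀ f : ℂ → ℂ, DifferentiableOn ℂ f U → ∀ z ∈ U, HasDerivAt f (deriv f z) z :=
    fun f hf z hz => (hf.differentiableAt (hU.mem_nhds hz)).hasDerivAt
  have dF := d0 F hF
  have dF1 := d0 _ (hF.deriv hU)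
  have dF2 := d0 _ ((hF.deriv hU).deriv hU)
  have dG := d0 G hG
  have dG1 := d0 _ (hG.deriv hU)
  have dG2 := d0 _ ((hG.deriv hU).deriv hU)
  have dP : ∀ z, HasDerivAt (fun z : ℂ => 1 - a * z) (-a) z := fun z => by
    simpa using ((hasDerivAt_id z).const_mul a).const_sub 1
  have du : ∀ z, HasDerivAt (fun z : ℂ => z - z₀) 1 z := fun z => (hasDerivAt_id z).sub_const z₀
  have dQ : ∀ z ∈ U, HasDerivAt (fun z : ℂ => 1 - c * F z) (-(c * deriv F z)) z := fun z hz =>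
    ((dF z hz).const_mul c).const_sub 1
  have E1 : ∀ z ∈ U, deriv F z * (1 - a * z) + (F z - γ) * (-a) = (1 - c * F z) * G z +
      (z - z₀) * (-(c * deriv F z) * G z + (1 - c * F z) * deriv G z) := fun z hz => by
    have := sp_deriv_eq hU hz h (((dF z hz).sub_const γ).mul (dP z))
      ((du z).mul ((dQ z hz).mul (dG z hz)))
    simpa using this
  have dR : ∀ z ∈ U, HasDerivAt (fun z => -(c * deriv F z) * G z + (1 - c * F z) * deriv G z)
      (-(c * deriv (deriv F) z) * G z + -(c * deriv F z) * deriv G z +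
        (-(c * deriv F z) * deriv G z + (1 - c * F z) * deriv (deriv G) z)) z := fun z hz =>
    ((((dF1 z hz).const_mul c).neg).mul (dG z hz)).add ((dQ z hz).mul (dG1 z hz))
  have E2 : ∀ z ∈ U, (deriv (deriv F) z * (1 - a * z) + deriv F z * (-a)) + deriv F z * (-a) =
      (-(c * deriv F z) * G z + (1 - c * F z) * deriv G z) +
      (1 * (-(c * deriv F z) * G z + (1 - c * F z) * deriv G z) + (z - z₀) *
      (-(c * deriv (deriv F) z) * G z + -(c * deriv F z) * deriv G z +
        (-(c * deriv F z) * deriv G z + (1 - c * F z) * deriv (deriv G) z))) := fun z hz =>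
    sp_deriv_eq hU hz E1
      (((dF1 z hz).mul (dP z)).add (((dF z hz).sub_const γ).mul_const (-a)))
      (((dQ z hz).mul (dG z hz)).add ((du z).mul (dR z hz)))
  have dS := ((((dF2 z₀ hz).const_mul c).neg.mul (dG z₀ hz)).add
    (((dF1 z₀ hz).const_mul c).neg.mul (dG1 z₀ hz))).add
    ((((dF1 z₀ hz).const_mul c).neg.mul (dG1 z₀ hz)).add ((dQ z₀ hz).mul (dG2 z₀ hz)))
  have E3 := sp_deriv_eq hU hz E2
    ((((dF2 z₀ hz).mul (dP z₀)).add ((dF1 z₀ hz).mul_const (-a))).add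
      ((dF1 z₀ hz).mul_const (-a)))
    ((dR z₀ hz).add (((dR z₀ hz).const_mul 1).add ((du z₀).mul dS)))
  have E1' := E1 z₀ hz
  have E2' := E2 z₀ hz
  rw [hγ] at E1' E2'
  simp only [Pi.mul_apply, Pi.neg_apply, Pi.add_apply, hγ, sub_self, zero_mul, add_zero] at E1' E2' E3
  refine ⟨by linear_combination E1', by linear_combination E2', by linear_combination E3⟩

/-- Schur class -/
def SB (F : ℂ → ℂ) : Prop :=
  DifferentiableOn ℂ F (ball (0 : ℂ) 1) ∧ ∀ z ∈ ball (0 : ℂ) 1, ‖F z‖ ≤ 1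

open scoped ComplexConjugate in
lemma sp_fwd {F : ℂ → ℂ} {z₀ γ : ℂ} (hF : SB F) (hz₀ : ‖z₀‖ < 1) (hγ : ‖γ‖ < 1)
    (h0 : F z₀ = γ) : ∃ G, SB G ∧ ∀ z ∈ ball (0 : ℂ) 1,
      (F z - γ) * (1 - conj z₀ * z) = (z - z₀) * ((1 - conj γ * F z) * G z) := by
  have hz₀' : z₀ ∈ ball (0 : ℂ) 1 := by simpa using hz₀
  set M : ℂ → ℂ := fun z => (F z - γ) / (1 - conj γ * F z) with hM
  have hMd : DifferentiableOn ℂ M (ball 0 1) :=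
    (hF.1.sub_const γ).div ((hF.1.const_mul _).const_sub 1) fun z hz => sp_ne hγ (hF.2 z hz)
  have hM0 : M z₀ = 0 := by simp [hM, h0]
  have hM1 : ∀ z ∈ ball (0 : ℂ) 1, ‖M z‖ ≤ 1 := fun z hz => sp_mob_le hγ (hF.2 z hz)
  have hD : DifferentiableOn ℂ (dslope M z₀) (ball 0 1) :=
    (Complex.differentiableOn_dslope (isOpen_ball.mem_nhds hz₀')).2 hMd
  have hGd : DifferentiableOn ℂ (fun z => dslope M z₀ z * (1 - conj z₀ * z)) (ball 0 1) :=
    hD.mul (by fun_prop)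
  have hsl : ∀ z, (z - z₀) * dslope M z₀ z = M z := fun z => by
    have := sub_smul_dslope M z₀ z
    simpa [hM0] using this
  have key : ∀ z ∈ ball (0 : ℂ) 1, ‖M z‖ ≤ ‖(z - z₀) / (1 - conj z₀ * z)‖ := by
    intro z hz
    have hz1 : ‖z‖ < 1 := by simpa using hz
    have hn : ‖-z₀‖ < 1 := by simpa using hz₀
    set ψ : ℂ → ℂ := fun w => (w - -z₀) / (1 - conj (-z₀) * w) with hψ
    have hmap : Set.MapsTo ψ (ball 0 1) (ball 0 1) := fun w hw => by
      have := sp_mob_lt hn (by simpa using hw : ‖w‖ < 1)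
      simpa [hψ] using this
    have hψd : DifferentiableOn ℂ ψ (ball 0 1) := by
      apply DifferentiableOn.div (by fun_prop) (by fun_prop)
      intro w hw
      exact sp_ne hn (by simpa using (le_of_lt (by simpa using hw) : ‖w‖ ≤ 1))
    have hw := sp_mob_lt hz₀ hz1
    have := Complex.norm_le_norm_of_mapsTo_ball (f := M ∘ ψ) (R := 1) (hMd.comp hψd hmap)
      (fun w hw => by simpa using hM1 _ (hmap hw)) (by simp [hψ, hM0]) hw
    have hinv : ψ ((z - z₀) / (1 - conj z₀ * z)) = z := by
      have h1 := sp_ne hz₀ hz1.le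
      have h2 := sp_ne hn hw.le
      have h3 := sp_ne hz₀ hz₀.le
      simp only [hψ]
      rw [div_eq_iff h2]
      rw [map_neg]
      have hq : (z - z₀) / (1 - conj z₀ * z) * (1 - conj z₀ * z) = z - z₀ := div_mul_cancel₀ _ h1
      linear_combination hq
    simpa [hinv] using this
  have hne : ∀ z ∈ ball (0 : ℂ) 1, z ≠ z₀ → ‖dslope M z₀ z * (1 - conj z₀ * z)‖ ≤ 1 := by
    intro z hz hzz
    have hz1 : ‖z‖ < 1 := by simpa using hz
    have k := key z hz
    have h1 := norm_pos_iff.2 (sp_ne hz₀ hz1.le)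
    have h2 := norm_pos_iff.2 (sub_ne_zero.2 hzz)
    rw [← hsl z, norm_mul, norm_div, le_div_iff₀ h1, mul_assoc] at k
    rw [norm_mul]
    exact le_of_mul_le_mul_left (by linarith) h2
  refine ⟨_, ⟨hGd, ?_⟩, ?_⟩
  · intro z hz
    by_cases hzz : z = z₀
    · subst hzz
      have hc : Filter.Tendsto (fun w => ‖dslope M z w * (1 - conj z * w)‖) (nhdsWithin z {z}ᶜ)
          (nhds ‖dslope M z z * (1 - conj z * z)‖) :=
        ((hGd.continuousOn.continuousAt (isOpen_ball.mem_nhds hz)).norm.tendsto).mono_left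
          nhdsWithin_le_nhds
      refine le_of_tendsto hc ?_
      filter_upwards [self_mem_nhdsWithin, nhdsWithin_le_nhds (isOpen_ball.mem_nhds hz)] with w h1 h2
      exact hne w h2 h1
    · exact hne z hz hzz
  · intro z hz
    have h1 := hsl z
    have h2 := sp_ne hγ (hF.2 z hz)
    have h3 : M z * (1 - conj γ * F z) = F z - γ := div_mul_cancel₀ _ h2
    rw [← h3, ← h1]
    ring

open scoped ComplexConjugate in
lemma sp_bwd {G : ℂ → ℂ} {z₀ γ : ℂ} (hG : SB G) (hz₀ : ‖z₀‖ < 1) (hγ : ‖γ‖ < 1) :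
    ∃ F, DifferentiableOn ℂ F (ball (0 : ℂ) 1) ∧ (∀ z ∈ ball (0 : ℂ) 1, ‖F z‖ < 1) ∧ F z₀ = γ ∧
      ∀ z ∈ ball (0 : ℂ) 1,
      (F z - γ) * (1 - conj z₀ * z) = (z - z₀) * ((1 - conj γ * F z) * G z) := by
  have hn : ‖-γ‖ < 1 := by simpa using hγ
  set B : ℂ → ℂ := fun z => (z - z₀) / (1 - conj z₀ * z) * G z with hB
  have hP : ∀ z ∈ ball (0 : ℂ) 1, 1 - conj z₀ * z ≠ 0 := fun z hz =>
    sp_ne hz₀ (le_of_lt (by simpa using hz))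
  have hBd : DifferentiableOn ℂ B (ball 0 1) :=
    (DifferentiableOn.div (by fun_prop) (by fun_prop) hP).mul hG.1
  have hB1 : ∀ z ∈ ball (0 : ℂ) 1, ‖B z‖ < 1 := fun z hz => by
    have h1 := sp_mob_lt hz₀ (by simpa using hz : ‖z‖ < 1)
    have h2 := hG.2 z hz
    simp only [hB, norm_mul] at *
    nlinarith [norm_nonneg (G z), norm_nonneg ((z - z₀) / (1 - conj z₀ * z))]
  refine ⟨fun z => (B z - -γ) / (1 - conj (-γ) * B z), ?_, ?_, ?_, ?_⟩
  · exact (hBd.sub_const _).div ((hBd.const_mul _).const_sub 1) fun z hz => sp_ne hn (hB1 z hz).le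
  · exact fun z hz => sp_mob_lt hn (hB1 z hz)
  · simp [hB]
  · intro z hz
    have h1 := sp_ne hn (hB1 z hz).le
    have h2 := hP z hz
    have h3 : B z * (1 - conj z₀ * z) = (z - z₀) * G z := by
      simp only [hB]; rw [mul_right_comm, div_mul_cancel₀ _ h2]
    rw [map_neg] at h1
    have h4 : (B z - -γ) / (1 - conj (-γ) * B z) - γ =
        B z * (1 - conj γ * γ) / (1 - -conj γ * B z) := by
      rw [map_neg, eq_div_iff h1, sub_mul, div_mul_cancel₀ _ h1]; ring
    have h5 : 1 - conj γ * ((B z - -γ) / (1 - conj (-γ) * B z)) =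
        (1 - conj γ * γ) / (1 - -conj γ * B z) := by
      rw [map_neg, eq_div_iff h1, sub_mul, mul_assoc, div_mul_cancel₀ _ h1]; ring
    rw [h4, h5]
    linear_combination ((1 - conj γ * γ) / (1 - -conj γ * B z)) * h3

open scoped ComplexConjugate in
lemma sp_one_sub (z : ℂ) : ((1 - ‖z‖ ^ 2 : ℝ) : ℂ) = 1 - conj z * z := by
  rw [mul_comm, Complex.mul_conj, Complex.normSq_eq_norm_sq]; push_cast; rfl

open scoped ComplexConjugate in
lemma sp_H2 {f : ℂ → ℂ} {z g0 g1 : ℂ} (hz : ‖z‖ < 1) (hf : ‖f z‖ < 1)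
    (h1 : deriv f z * (1 - conj z * z) = (1 - conj (f z) * f z) * g0)
    (h2 : iteratedDeriv 2 f z * (1 - conj z * z) - 2 * conj z * deriv f z =
      2 * ((1 - conj (f z) * f z) * g1 - conj (f z) * deriv f z * g0)) :
    H1 f z = g0 ∧ D2 f z = 2 * g1 * (1 - conj z * z) := by
  have hs := sp_ne hz hz.le
  have ht := sp_ne hf hf.le
  constructor
  · rw [H1, sp_one_sub, sp_one_sub, div_eq_iff ht]
    linear_combination h1
  · rw [D2, sp_one_sub, sp_one_sub]
    generalize (1 - conj z * z) = s at *
    generalize (1 - conj (f z) * f z) = t at *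
    field_simp
    have h3 : iteratedDeriv 2 f z * s = 2 * conj z * deriv f z +
      2 * (t * g1 - conj (f z) * deriv f z * g0) := by linear_combination h2
    linear_combination t * h2 + 2 * conj (f z) * deriv f z * h1

open scoped ComplexConjugate in
lemma sp_key {f g h k : ℂ → ℂ} {z₀ γ₀ γ₁ γ₂ : ℂ} (hz₀ : ‖z₀‖ < 1)
    (hf : DifferentiableOn ℂ f (ball (0 : ℂ) 1)) (hg : DifferentiableOn ℂ g (ball (0 : ℂ) 1))
    (hh : DifferentiableOn ℂ h (ball (0 : ℂ) 1)) (hk : DifferentiableOn ℂ k (ball (0 : ℂ) 1))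
    (f0 : f z₀ = γ₀) (g0 : g z₀ = γ₁) (h0 : h z₀ = γ₂)
    (fg : ∀ z ∈ ball (0 : ℂ) 1,
      (f z - γ₀) * (1 - conj z₀ * z) = (z - z₀) * ((1 - conj γ₀ * f z) * g z))
    (gh : ∀ z ∈ ball (0 : ℂ) 1,
      (g z - γ₁) * (1 - conj z₀ * z) = (z - z₀) * ((1 - conj γ₁ * g z) * h z))
    (hk' : ∀ z ∈ ball (0 : ℂ) 1,
      (h z - γ₂) * (1 - conj z₀ * z) = (z - z₀) * ((1 - conj γ₂ * h z) * k z))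
    (s t₀ t₁ t₂ f1 g1 f2 : ℂ) (hs : s = 1 - conj z₀ * z₀) (ht₀ : t₀ = 1 - conj γ₀ * γ₀)
    (ht₁ : t₁ = 1 - conj γ₁ * γ₁) (ht₂ : t₂ = 1 - conj γ₂ * γ₂)
    (hf1 : f1 = t₀ * γ₁ / s) (hg1 : g1 = t₁ * γ₂ / s)
    (hf2 : f2 = (2 * (t₀ * g1 - conj γ₀ * f1 * γ₁) + 2 * conj z₀ * f1) / s) :
    iteratedDeriv 3 f z₀ = (3 * (t₀ * ((2 * (- conj γ₁ * g1 * γ₂) + 2 * conj z₀ * g1) / s)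
       - 2 * conj γ₀ * f1 * g1 - conj γ₀ * f2 * γ₁) + 3 * conj z₀ * f2) / s
       + 6 * t₀ * t₁ * t₂ / s ^ 3 * k z₀ := by
  have hz₀' : z₀ ∈ ball (0 : ℂ) 1 := by simpa using hz₀
  have hs0 : s ≠ 0 := hs ▸ sp_ne hz₀ hz₀.le
  obtain ⟨a1, a2, a3⟩ := sp_derivs isOpen_ball hz₀' hf hg f0 fg
  obtain ⟨b1, b2, -⟩ := sp_derivs isOpen_ball hz₀' hg hh g0 gh
  obtain ⟨c1, -, -⟩ := sp_derivs isOpen_ball hz₀' hh hk h0 hk'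
  rw [← hs, ← ht₀, g0] at a1 a2 a3
  rw [← hs, ← ht₁, h0] at b1 b2
  rw [← hs, ← ht₂] at c1
  have e1 : deriv f z₀ = f1 := by rw [hf1, eq_div_iff hs0, a1]
  have e2 : deriv g z₀ = g1 := by rw [hg1, eq_div_iff hs0, b1]
  have e3 : deriv h z₀ = t₂ * k z₀ / s := by rw [eq_div_iff hs0, c1]
  rw [e1, e2] at a2 a3
  rw [e2, e3] at b2
  have e4 : iteratedDeriv 2 f z₀ = f2 := by
    rw [hf2, eq_div_iff hs0]; linear_combination a2
  have e5 : iteratedDeriv 2 g z₀ =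
      (2 * (t₁ * (t₂ * k z₀ / s) - conj γ₁ * g1 * γ₂) + 2 * conj z₀ * g1) / s := by
    rw [eq_div_iff hs0]; linear_combination b2
  rw [e4, e5] at a3
  have e6 : iteratedDeriv 3 f z₀ = (3 * (t₀ * ((2 * (t₁ * (t₂ * k z₀ / s) - conj γ₁ * g1 * γ₂)
      + 2 * conj z₀ * g1) / s) - 2 * conj γ₀ * f1 * g1 - conj γ₀ * f2 * γ₁)
      + 3 * conj z₀ * f2) / s := by
    rw [eq_div_iff hs0]; linear_combination a3
  rw [e6]
  clear hf1 hg1 hf2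
  field_simp
  ring

/-- Schwarz-Pick Lemma of the third derivative: the variability region of `f'''(z₀)`
over all `f ∈ ℋ` with `f(z₀) = γ₀`, `H¹f(z₀) = γ₁`, `H²f(z₀) = γ₂` is a closed disk
with radius `ρ₃ = 6(1-|γ₀|²)(1-|γ₁|²)(1-|γ₂|²)/(1-|z₀|²)³`. -/
theorem schwarz_pick_third_variability (z₀ γ₀ γ₁ γ₂ : ℂ)
    (hz₀ : z₀ ∈ ball (0 : ℂ) 1) (hγ₀ : γ₀ ∈ ball (0 : ℂ) 1)
    (hγ₁ : γ₁ ∈ ball (0 : ℂ) 1) (hγ₂ : γ₂ ∈ ball (0 : ℂ) 1) :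
    ∃ c : ℂ,
      {w : ℂ | ∃ f : ℂ → ℂ, Hclass f ∧ f z₀ = γ₀ ∧ H1 f z₀ = γ₁ ∧ H2 f z₀ = γ₂ ∧
          iteratedDeriv 3 f z₀ = w} =
        closedBall c
          (6 * (1 - ‖γ₀‖ ^ 2) * (1 - ‖γ₁‖ ^ 2) * (1 - ‖γ₂‖ ^ 2) /
            (1 - ‖z₀‖ ^ 2) ^ 3) := by
  have nz : ‖z₀‖ < 1 := by simpa using hz₀
  have n0 : ‖γ₀‖ < 1 := by simpa using hγ₀
  have n1 : ‖γ₁‖ < 1 := by simpa using hγ₁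
  have n2 : ‖γ₂‖ < 1 := by simpa using hγ₂
  have hs0 := sp_ne nz nz.le
  have ht0 := sp_ne n0 n0.le
  have ht1 := sp_ne n1 n1.le
  set ρ : ℝ := 6 * (1 - ‖γ₀‖ ^ 2) * (1 - ‖γ₁‖ ^ 2) * (1 - ‖γ₂‖ ^ 2) / (1 - ‖z₀‖ ^ 2) ^ 3 with hρ
  have pos : ∀ x : ℂ, ‖x‖ < 1 → 0 < 1 - ‖x‖ ^ 2 := fun x hx => by nlinarith [norm_nonneg x]
  have ρpos : 0 < ρ := by
    have := pos _ nz
    have := pos _ n0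
    have := pos _ n1
    have := pos _ n2
    positivity
  have hρ' : (ρ : ℂ) = 6 * (1 - (starRingEnd ℂ) γ₀ * γ₀) * (1 - (starRingEnd ℂ) γ₁ * γ₁) *
      (1 - (starRingEnd ℂ) γ₂ * γ₂) / (1 - (starRingEnd ℂ) z₀ * z₀) ^ 3 := by
    simp only [← sp_one_sub, hρ]
    push_cast
    rfl
  have K := fun (f g h k : ℂ → ℂ) hf hg hh hk f0 g0 h0 fg gh hk' =>
    sp_key (f := f) (g := g) (h := h) (k := k) (γ₀ := γ₀) (γ₁ := γ₁) (γ₂ := γ₂) nz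
      hf hg hh hk f0 g0 h0 fg gh hk' _ _ _ _ _ _ _ rfl rfl rfl rfl rfl rfl rfl
  rw [← hρ'] at K
  obtain ⟨c, K⟩ : ∃ c : ℂ, ∀ f g h k : ℂ → ℂ, DifferentiableOn ℂ f (ball 0 1) →
      DifferentiableOn ℂ g (ball 0 1) → DifferentiableOn ℂ h (ball 0 1) →
      DifferentiableOn ℂ k (ball 0 1) → f z₀ = γ₀ → g z₀ = γ₁ → h z₀ = γ₂ →
      (∀ z ∈ ball (0 : ℂ) 1, (f z - γ₀) * (1 - (starRingEnd ℂ) z₀ * z) =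
        (z - z₀) * ((1 - (starRingEnd ℂ) γ₀ * f z) * g z)) →
      (∀ z ∈ ball (0 : ℂ) 1, (g z - γ₁) * (1 - (starRingEnd ℂ) z₀ * z) =
        (z - z₀) * ((1 - (starRingEnd ℂ) γ₁ * g z) * h z)) →
      (∀ z ∈ ball (0 : ℂ) 1, (h z - γ₂) * (1 - (starRingEnd ℂ) z₀ * z) =
        (z - z₀) * ((1 - (starRingEnd ℂ) γ₂ * h z) * k z)) →
      iteratedDeriv 3 f z₀ = c + (ρ : ℂ) * k z₀ := ⟨_, K⟩
  refine ⟨c, Set.Subset.antisymm ?_ ?_⟩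
  · rintro w ⟨f, hf, f0, h1, h2, h3⟩
    obtain ⟨g, hg, fg⟩ := sp_fwd ⟨hf.1, fun z hz => (by simpa using hf.2 hz : ‖f z‖ < 1).le⟩
      nz n0 f0
    obtain ⟨a1, a2, -⟩ := sp_derivs isOpen_ball hz₀ hf.1 hg.1 f0 fg
    obtain ⟨a3, a4⟩ := sp_H2 nz (f0 ▸ n0) (f0.symm ▸ a1) (f0.symm ▸ a2)
    have g0 : g z₀ = γ₁ := a3.symm.trans h1
    obtain ⟨h, hh, gh⟩ := sp_fwd hg nz n1 g0
    obtain ⟨b1, -, -⟩ := sp_derivs isOpen_ball hz₀ hg.1 hh.1 g0 gh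
    have h0 : h z₀ = γ₂ := by
      rw [H2, a4, h1, sp_one_sub, div_eq_iff (mul_ne_zero two_ne_zero ht1)] at h2
      apply mul_left_cancel₀ ht1
      linear_combination h2 / 2 - b1
    obtain ⟨k, hk, hk'⟩ := sp_fwd hh nz n2 h0
    rw [mem_closedBall, dist_eq_norm, ← h3,
      K f g h k hf.1 hg.1 hh.1 hk.1 f0 g0 h0 fg gh hk', add_sub_cancel_left, norm_mul,
      Complex.norm_real, Real.norm_of_nonneg ρpos.le]
    exact mul_le_of_le_one_right ρpos.le (hk.2 z₀ hz₀)
  · intro w hw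
    rw [mem_closedBall, dist_eq_norm] at hw
    have ρne : (ρ : ℂ) ≠ 0 := by exact_mod_cast ρpos.ne'
    obtain ⟨κ, hκ⟩ : ∃ κ : ℂ, κ = (w - c) / (ρ : ℂ) := ⟨_, rfl⟩
    have hk : SB (fun _ => κ) := ⟨by fun_prop, fun _ _ => by
      rw [hκ, norm_div, Complex.norm_real, Real.norm_of_nonneg ρpos.le]
      exact div_le_one_of_le₀ hw ρpos.le⟩
    obtain ⟨h, hh, hh1, h0, hk'⟩ := sp_bwd hk nz n2
    obtain ⟨g, hg, hg1, g0, gh⟩ := sp_bwd ⟨hh, fun z hz => (hh1 z hz).le⟩ nz n1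
    obtain ⟨f, hf, hf1, f0, fg⟩ := sp_bwd ⟨hg, fun z hz => (hg1 z hz).le⟩ nz n0
    obtain ⟨a1, a2, -⟩ := sp_derivs isOpen_ball hz₀ hf hg f0 fg
    obtain ⟨b1, -, -⟩ := sp_derivs isOpen_ball hz₀ hg hh g0 gh
    obtain ⟨a3, a4⟩ := sp_H2 nz (f0 ▸ n0) (f0.symm ▸ a1) (f0.symm ▸ a2)
    have a5 : H1 f z₀ = γ₁ := a3.trans g0
    refine ⟨f, ⟨hf, fun z hz => by simpa using hf1 z hz⟩, f0, a5, ?_, ?_⟩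
    · rw [H2, a4, a5, sp_one_sub, div_eq_iff (mul_ne_zero two_ne_zero ht1)]
      rw [h0] at b1
      linear_combination 2 * b1
    · rw [K f g h _ hf hg hh hk.1 f0 g0 h0 fg gh hk', hκ, mul_div_cancel₀ _ ρne]
      exact add_sub_cancel _ _
end
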